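/- Let 0 < φ < 1, let f be the density of an absolutely continuous nonnegative random variable Z with distribution function F satisfying F(0) = 0, let v : [0,∞) → ℝ be locally bounded, and let m be the locally bounded solution of the defective renewal equation m(u) = φ ∫₀^u m(u−y) f(y) dy + v(u) for u ≥ 0. Assume F and v belong to C²₀([0,∞)). Then m belongs to C²₀([0,∞)), m(0) = v(0), for all u > 0 one has m'(u) = φ ( ∫₀^u m(u−y) f'(y) dy + m(u) f(0) ) + v'(u), and lim_{u↓0} m'(u) = φ v(0) f(0) + v'(0). -/

import Mathlib

open MeasureTheory Filter Topology

/-!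
Let `k` be the extension of the density `f` to `[0, ∞)` by continuity, and `⋆` the convolution on
the half-line. The renewal equation reads `m = φ (m ⋆ k) + v`, and `(m ⋆ k)' = k(0) m + m ⋆ k'`.
Hence `m ⋆ k` is of class `C¹` as soon as `m` is continuous, and has one more derivative than `m` as
long as `k` is as smooth as `m`: the regularity of `m` bootstraps up to that of `v`.

Continuity of `m` needs its measurability, which is not given. But `m ⋆ k` is measurable for every
locally bounded `m`. Let `O` be the largest open set on which `m` is a.e. measurable. If `O`
contains every `t ∈ (0, u)` with `k(u - t) ≠ 0`, then `m ⋆ k` agrees at `u` with the continuous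
function `(1_O m) ⋆ k`. Otherwise `t ↦ m(t) k(u - t)` is not measurable on `(0, u)`, so that its
integral takes the default value `0`; such `u` form an open set.
-/

section

open Set Function

section Ici

variable {E : Type*} [NormedAddCommGroup E] {g : ℝ → E} {a : ℝ}

theorem tendsto_nhdsGT_of_continuousOn_Ici (hg : ContinuousOn g (Ici a)) :
    Tendsto g (𝓝[>] a) (𝓝 (g a)) :=
  (hg a self_mem_Ici).mono_left (nhdsWithin_mono _ Ioi_subset_Ici_self)

theorem continuous_comp_max_of_continuousOn_Ici (hg : ContinuousOn g (Ici a)) :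
    Continuous fun x => g (max x a) :=
  hg.comp_continuous (by fun_prop) fun x => le_max_right x a

theorem locallyIntegrableOn_Ici_of_forall_exists_norm_le
    (hg : AEStronglyMeasurable g (volume.restrict (Ici a)))
    (hbdd : ∀ x, a < x → ∃ M, ∀ u ∈ Icc a x, ‖g u‖ ≤ M) : LocallyIntegrableOn g (Ici a) := by
  refine (locallyIntegrableOn_iff isClosed_Ici.isLocallyClosed).2 fun K hKa hK => ?_
  obtain ⟨x, hax, hKx⟩ : ∃ x, a < x ∧ K ⊆ Iic x := by
    obtain ⟨x, hx⟩ := hK.bddAbove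
    exact ⟨max x (a + 1), by simp, fun y hy => (hx hy).trans (le_max_left _ _)⟩
  obtain ⟨M, hM⟩ := hbdd x hax
  refine .of_bound hK.measure_lt_top (hg.mono_set hKa) M ?_
  filter_upwards [ae_restrict_mem hK.measurableSet] with u hu using hM u ⟨hKa hu, hKx hu⟩

theorem locallyIntegrable_indicator_Ici (hg : LocallyIntegrableOn g (Ici a)) :
    LocallyIntegrable ((Ici a).indicator g) := by
  refine locallyIntegrable_iff.2 fun K hK => ?_
  rw [IntegrableOn, integrable_indicator_iff measurableSet_Ici, IntegrableOn,
    Measure.restrict_restrict measurableSet_Ici]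
  exact hg.integrableOn_compact_subset inter_subset_left (hK.inter_left isClosed_Ici)

variable [NormedSpace ℝ E]

theorem eqOn_derivWithin_Ici_deriv (g : ℝ → E) (a : ℝ) :
    EqOn (derivWithin g (Ici a)) (deriv g) (Ioi a) :=
  fun _ hu => derivWithin_of_mem_nhds (Ici_mem_nhds hu)

theorem tendsto_deriv_nhdsGT_of_contDiffOn_Ici (hg : ContDiffOn ℝ 1 g (Ici a)) :
    Tendsto (deriv g) (𝓝[>] a) (𝓝 (derivWithin g (Ici a) a)) :=
  (tendsto_nhdsGT_of_continuousOn_Ici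
    (hg.continuousOn_derivWithin (uniqueDiffOn_Ici a) le_rfl)).congr' <|
      eventuallyEq_nhdsWithin_of_eqOn (eqOn_derivWithin_Ici_deriv g a)

theorem eqOn_iteratedDeriv_derivWithin_Ici (g : ℝ → E) (a : ℝ) (k : ℕ) :
    EqOn (iteratedDeriv k (derivWithin g (Ici a))) (iteratedDeriv (k + 1) g) (Ioi a) := by
  intro u hu
  rw [iteratedDeriv_succ']
  exact ((eqOn_derivWithin_Ici_deriv g a).eventuallyEq_of_mem (Ioi_mem_nhds hu)).iteratedDeriv_eq k

theorem contDiffOn_one_Ici_of_tendsto_deriv {L : E} (hg : ContinuousOn g (Ici a))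
    (hg' : ContDiffOn ℝ 1 g (Ioi a)) (hL : Tendsto (deriv g) (𝓝[>] a) (𝓝 L)) :
    ContDiffOn ℝ 1 g (Ici a) := by
  have hd : DifferentiableOn ℝ g (Ioi a) := hg'.differentiableOn one_ne_zero
  have hda : HasDerivWithinAt g L (Ici a) a := hasDerivWithinAt_Ici_of_tendsto_deriv hd
    ((hg a self_mem_Ici).mono Ioi_subset_Ici_self) self_mem_nhdsWithin hL
  refine (contDiffOn_one_iff_derivWithin (uniqueDiffOn_Ici a)).2
    ⟨fun u hu => ?_, fun u hu => ?_⟩ <;>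
    rcases eq_or_lt_of_le (mem_Ici.1 hu) with rfl | hu
  · exact hda.differentiableWithinAt
  · exact (hd.differentiableAt (Ioi_mem_nhds hu)).differentiableWithinAt
  · rw [← continuousWithinAt_Ioi_iff_Ici, ContinuousWithinAt,
      hda.derivWithin (uniqueDiffOn_Ici a a self_mem_Ici)]
    exact hL.congr' (eventuallyEq_nhdsWithin_of_eqOn (eqOn_derivWithin_Ici_deriv g a).symm)
  · have hcont : ContinuousOn (derivWithin g (Ici a)) (Ioi a) :=
      (hg'.continuousOn_deriv_of_isOpen isOpen_Ioi le_rfl).congr (eqOn_derivWithin_Ici_deriv g a)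
    exact (hcont.continuousAt (Ioi_mem_nhds hu)).continuousWithinAt

theorem contDiffOn_Ici_iff {n : ℕ} :
    ContDiffOn ℝ n g (Ici a) ↔ ContinuousOn g (Ici a) ∧ ContDiffOn ℝ n g (Ioi a) ∧
      ∀ k ≤ n, ∃ L, Tendsto (iteratedDeriv k g) (𝓝[>] a) (𝓝 L) := by
  constructor
  · intro hg
    refine ⟨hg.continuousOn, hg.mono Ioi_subset_Ici_self, fun k hk => ?_⟩
    have hk' : (k : WithTop ℕ∞) ≤ n := by exact_mod_cast hk
    refine ⟨_, (tendsto_nhdsGT_of_continuousOn_Ici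
      (hg.continuousOn_iteratedDerivWithin hk' (uniqueDiffOn_Ici a))).congr' ?_⟩
    refine eventuallyEq_nhdsWithin_of_eqOn fun u hu => ?_
    exact iteratedDerivWithin_eq_iteratedDeriv (uniqueDiffOn_Ici a)
      ((hg.contDiffAt (Ici_mem_nhds hu)).of_le hk') (Ioi_subset_Ici_self hu)
  · induction n generalizing g with
    | zero => exact fun h => contDiffOn_zero.2 h.1
    | succ n ih =>
      rintro ⟨hcont, hdiff, hlim⟩
      obtain ⟨L, hL⟩ := hlim 1 (by lia)
      have hone : ContDiffOn ℝ 1 g (Ici a) := contDiffOn_one_Ici_of_tendsto_deriv hcont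
        (hdiff.of_le (by exact_mod_cast Nat.le_add_left 1 n)) (by rwa [iteratedDeriv_one] at hL)
      rw [Nat.cast_succ] at hdiff ⊢
      refine (contDiffOn_succ_iff_derivWithin (uniqueDiffOn_Ici a)).2
        ⟨hone.differentiableOn one_ne_zero, by simp, ih ⟨?_, ?_, fun k hk => ?_⟩⟩
      · exact hone.continuousOn_derivWithin (uniqueDiffOn_Ici a) le_rfl
      · exact ((contDiffOn_succ_iff_deriv_of_isOpen isOpen_Ioi).1 hdiff).2.2.congr
          (eqOn_derivWithin_Ici_deriv g a)
      · obtain ⟨L', hL'⟩ := hlim (k + 1) (by lia)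
        exact ⟨L', hL'.congr' (eventuallyEq_nhdsWithin_of_eqOn
          (eqOn_iteratedDeriv_derivWithin_Ici g a k).symm)⟩

theorem hasDerivWithinAt_integral_Ici [CompleteSpace E] (hg : ContinuousOn g (Ici a)) {u : ℝ}
    (hu : a ≤ u) : HasDerivWithinAt (fun x => ∫ t in a..x, g t) (g u) (Ici a) u := by
  have hderiv :=
    ((continuous_comp_max_of_continuousOn_Ici hg).integral_hasStrictDerivAt a u).hasDerivAt
  simp only [max_eq_left hu] at hderiv
  refine hderiv.hasDerivWithinAt.congr_of_mem (fun x hx => ?_) hu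
  refine intervalIntegral.integral_congr fun t ht => ?_
  rw [uIcc_of_le hx] at ht
  simp only [max_eq_left ht.1]

theorem integral_derivWithin_Ici [CompleteSpace E] (hg : ContDiffOn ℝ 1 g (Ici a)) {u : ℝ}
    (hu : a ≤ u) : ∫ t in a..u, derivWithin g (Ici a) t = g u - g a := by
  have hcont := hg.continuousOn_derivWithin (uniqueDiffOn_Ici a) le_rfl
  refine intervalIntegral.integral_eq_sub_of_hasDerivAt_of_le hu
    (hg.continuousOn.mono Icc_subset_Ici_self) (fun t ht => ?_)
    (ContinuousOn.intervalIntegrable_of_Icc hu (hcont.mono Icc_subset_Ici_self))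
  exact ((hg.differentiableOn one_ne_zero t ht.1.le).hasDerivWithinAt).hasDerivAt
    (Ici_mem_nhds ht.1)

theorem isClosed_triangle (a b : ℝ) : IsClosed {p : ℝ × ℝ | a ≤ p.2 ∧ p.2 ≤ p.1 ∧ p.1 ≤ b} :=
  (isClosed_le continuous_const continuous_snd).inter
    ((isClosed_le continuous_snd continuous_fst).inter
      (isClosed_le continuous_fst continuous_const))

theorem integral_integral_triangle_swap {G : ℝ → ℝ → E} {a b : ℝ} (hab : a ≤ b)
    (hG : IntegrableOn (uncurry G) {p | a ≤ p.2 ∧ p.2 ≤ p.1 ∧ p.1 ≤ b}) :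
    ∫ s in a..b, ∫ t in a..s, G s t = ∫ t in a..b, ∫ s in t..b, G s t := by
  set T : Set (ℝ × ℝ) := {p | a ≤ p.2 ∧ p.2 ≤ p.1 ∧ p.1 ≤ b}
  have hT : MeasurableSet T := (isClosed_triangle a b).measurableSet
  have hinner (s : ℝ) (hs : s ∈ Ioc a b) :
      ∫ t in a..s, G s t = ∫ t in a..b, T.indicator (uncurry G) (s, t) := by
    have hslice : Ioc a b ∩ Prod.mk s ⁻¹' T = Ioc a s := by
      ext t
      exact ⟨fun h => ⟨h.1.1, h.2.2.1⟩, fun h => ⟨⟨h.1, h.2.trans hs.2⟩, h.1.le, h.2, hs.2⟩⟩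
    rw [intervalIntegral.integral_of_le hs.1.le, intervalIntegral.integral_of_le hab, ← hslice,
      ← setIntegral_indicator (measurable_prodMk_left hT)]
    rfl
  have houter (t : ℝ) (ht : t ∈ Ioc a b) :
      ∫ s in a..b, T.indicator (uncurry G) (s, t) = ∫ s in t..b, G s t := by
    have hslice : Ioc a b ∩ (fun s => (s, t)) ⁻¹' T = Icc t b := by
      ext s
      exact ⟨fun h => ⟨h.2.2.1, h.1.2⟩, fun h => ⟨⟨ht.1.trans_le h.1, h.2⟩, ht.1.le, h.1, h.2⟩⟩
    rw [intervalIntegral.integral_of_le ht.2, intervalIntegral.integral_of_le hab,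
      ← integral_Icc_eq_integral_Ioc (x := t), ← hslice,
      ← setIntegral_indicator (measurable_prodMk_right hT)]
    rfl
  have hTG : IntegrableOn (uncurry fun s t => T.indicator (uncurry G) (s, t))
      (uIoc a b ×ˢ uIoc a b) (volume.prod volume) :=
    ((integrable_indicator_iff hT).2 hG).integrableOn
  calc ∫ s in a..b, ∫ t in a..s, G s t
      = ∫ s in a..b, ∫ t in a..b, T.indicator (uncurry G) (s, t) :=
        intervalIntegral.integral_congr_Ioo_of_le hab fun s hs => hinner s (Ioo_subset_Ioc_self hs)
    _ = ∫ t in a..b, ∫ s in a..b, T.indicator (uncurry G) (s, t) :=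
        intervalIntegral_intervalIntegral_swap hTG
    _ = ∫ t in a..b, ∫ s in t..b, G s t :=
        intervalIntegral.integral_congr_Ioo_of_le hab fun t ht => houter t (Ioo_subset_Ioc_self ht)

end Ici

section HalfLineConv

variable {g k g₁ k₁ : ℝ → ℝ} {u : ℝ}

/-- The convolution `∫₀^u g(t) k(u - t) dt` of two functions on the half-line `[0, ∞)`, evaluated
at `u ≥ 0`. The values of `g` and `k` on `(-∞, 0]` play no role. -/
noncomputable def halfLineConv (g k : ℝ → ℝ) (u : ℝ) : ℝ :=
  ∫ t in (0 : ℝ)..u, g t * k (u - t)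

theorem halfLineConv_comm (g k : ℝ → ℝ) : halfLineConv g k = halfLineConv k g := by
  ext u
  simpa only [halfLineConv, sub_sub_cancel, sub_self, sub_zero, mul_comm] using
    (intervalIntegral.integral_comp_sub_left (a := 0) (b := u) (fun t => g t * k (u - t)) u).symm

theorem halfLineConv_congr (hg : EqOn g g₁ (Ioi 0)) (hk : EqOn k k₁ (Ioi 0)) (hu : 0 ≤ u) :
    halfLineConv g k u = halfLineConv g₁ k₁ u := by
  refine intervalIntegral.integral_congr_Ioo_of_le hu fun t ht => ?_
  rw [hg ht.1, hk (sub_pos.2 ht.2)]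

theorem continuous_halfLineConv (hg : LocallyIntegrable g) (hk : Continuous k) :
    Continuous (halfLineConv g k) := by
  refine continuous_iff_continuousAt.2 fun u => ?_
  obtain ⟨C, hC⟩ := isCompact_Icc.exists_bound_of_continuousOn
    (s := Icc (u - 1 - (max 0 u + 1)) (u + 1 - (min 0 u - 1))) hk.continuousOn
  have hIoc : uIoc (min 0 u - 1) (max 0 u + 1) = Ioc (min 0 u - 1) (max 0 u + 1) :=
    uIoc_of_le (by linarith [min_le_left 0 u, le_max_left 0 u])
  have hparam : ContinuousAt (fun p : ℝ × ℝ => ∫ t in (0 : ℝ)..p.2, g t * k (p.1 - t)) (u, u) := by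
    refine intervalIntegral.continuousAt_parametric_primitive_of_dominated
      (F := fun x t => g t * k (x - t)) (fun t => ‖g t‖ * C)
      (min 0 u - 1) (max 0 u + 1) (fun x => ?_) ?_ ?_ (.of_forall fun t => ?_)
      ⟨?_, ?_⟩ ⟨?_, ?_⟩ Real.volume_singleton
    · exact hg.aestronglyMeasurable.restrict.mul (by fun_prop)
    · filter_upwards [Icc_mem_nhds (sub_one_lt u) (lt_add_one u)] with x hx
      filter_upwards [ae_restrict_mem measurableSet_uIoc] with t ht
      rw [hIoc] at ht
      rw [norm_mul]
      gcongr
      exact hC _ ⟨by linarith [hx.1, ht.2], by linarith [hx.2, ht.1]⟩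
    · exact (hg.integrableOn_isCompact isCompact_uIcc).intervalIntegrable.norm.mul_const C
    · fun_prop
    all_goals linarith [min_le_left 0 u, min_le_right 0 u, le_max_left 0 u, le_max_right 0 u]
  exact hparam.comp (f := fun x => (x, x)) (by fun_prop)

theorem continuousOn_halfLineConv (hg : LocallyIntegrableOn g (Ici 0))
    (hk : ContinuousOn k (Ici 0)) : ContinuousOn (halfLineConv g k) (Ici 0) := by
  refine (continuous_halfLineConv (locallyIntegrable_indicator_Ici hg)
    (continuous_comp_max_of_continuousOn_Ici hk)).continuousOn.congr fun u hu => ?_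
  refine halfLineConv_congr (fun t ht => ?_) (fun t ht => ?_) hu
  · rw [indicator_of_mem (Ioi_subset_Ici_self ht)]
  · rw [max_eq_left (mem_Ioi.1 ht).le]

theorem integrableOn_triangle_mul_comp_sub (hg : ContinuousOn g (Ici 0))
    (hk : ContinuousOn k (Ici 0)) (u : ℝ) :
    IntegrableOn (uncurry fun s t => g t * k (s - t)) {p | 0 ≤ p.2 ∧ p.2 ≤ p.1 ∧ p.1 ≤ u} := by
  have hcompact : IsCompact {p : ℝ × ℝ | 0 ≤ p.2 ∧ p.2 ≤ p.1 ∧ p.1 ≤ u} :=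
    (isCompact_Icc (a := ((0, 0) : ℝ × ℝ)) (b := (u, u))).of_isClosed_subset (isClosed_triangle 0 u)
      fun p hp => ⟨⟨hp.1.trans hp.2.1, hp.1⟩, hp.2.2, hp.2.1.trans hp.2.2⟩
  refine ContinuousOn.integrableOn_compact hcompact (.mul ?_ ?_)
  · exact hg.comp continuousOn_snd fun p hp => hp.1
  · exact hk.comp (by fun_prop) fun p hp => sub_nonneg.2 hp.2.1

-- Writing `k(u - t) - k(0)` as `∫_t^u k'(s - t) ds` and exchanging the integrals avoids
-- differentiating an integral whose integrand depends on its upper limit.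
theorem halfLineConv_eq_integral (hg : ContinuousOn g (Ici 0)) (hk : ContDiffOn ℝ 1 k (Ici 0))
    (hu : 0 ≤ u) :
    halfLineConv g k u =
      ∫ s in (0 : ℝ)..u, (k 0 * g s + halfLineConv g (derivWithin k (Ici 0)) s) := by
  have hk' := hk.continuousOn_derivWithin (uniqueDiffOn_Ici 0) le_rfl
  have hincrement (t : ℝ) (ht : t ∈ Ioo 0 u) :
      ∫ s in t..u, derivWithin k (Ici 0) (s - t) = k (u - t) - k 0 := by
    rw [intervalIntegral.integral_comp_sub_right, sub_self,
      integral_derivWithin_Ici hk (sub_nonneg.2 ht.2.le)]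
  have hconv := continuousOn_halfLineConv (hg.locallyIntegrableOn measurableSet_Ici) hk'
  have hint {h : ℝ → ℝ} (hh : ContinuousOn h (Ici 0)) : IntervalIntegrable h volume 0 u :=
    (hh.mono Icc_subset_Ici_self).intervalIntegrable_of_Icc hu
  have hrest : ContinuousOn (fun t => g t * (k (u - t) - k 0)) (Icc 0 u) :=
    (hg.mono Icc_subset_Ici_self).mul <| (hk.continuousOn.comp (by fun_prop) fun t ht =>
      sub_nonneg.2 (mem_Icc.1 ht).2).sub continuousOn_const
  calc halfLineConv g k u
      = ∫ t in (0 : ℝ)..u, (k 0 * g t + g t * (k (u - t) - k 0)) := by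
        simp only [halfLineConv]; congr with t; ring
    _ = (∫ t in (0 : ℝ)..u, k 0 * g t) + ∫ t in (0 : ℝ)..u, g t * (k (u - t) - k 0) :=
        intervalIntegral.integral_add ((hint hg).const_mul _) (hrest.intervalIntegrable_of_Icc hu)
    _ = (∫ t in (0 : ℝ)..u, k 0 * g t) +
          ∫ t in (0 : ℝ)..u, ∫ s in t..u, g t * derivWithin k (Ici 0) (s - t) := by
        congr 1
        refine intervalIntegral.integral_congr_Ioo_of_le hu fun t ht => ?_
        rw [intervalIntegral.integral_const_mul, hincrement t ht]
    _ = (∫ t in (0 : ℝ)..u, k 0 * g t) +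
          ∫ s in (0 : ℝ)..u, halfLineConv g (derivWithin k (Ici 0)) s := by
        rw [← integral_integral_triangle_swap hu (integrableOn_triangle_mul_comp_sub hg hk' u)]
        simp only [halfLineConv]
    _ = ∫ s in (0 : ℝ)..u, (k 0 * g s + halfLineConv g (derivWithin k (Ici 0)) s) :=
        (intervalIntegral.integral_add ((hint hg).const_mul _) (hint hconv)).symm

theorem hasDerivWithinAt_halfLineConv (hg : ContinuousOn g (Ici 0))
    (hk : ContDiffOn ℝ 1 k (Ici 0)) (hu : 0 ≤ u) :
    HasDerivWithinAt (halfLineConv g k)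
      (k 0 * g u + halfLineConv g (derivWithin k (Ici 0)) u) (Ici 0) u := by
  have hk' := hk.continuousOn_derivWithin (uniqueDiffOn_Ici 0) le_rfl
  have hconv := continuousOn_halfLineConv (hg.locallyIntegrableOn measurableSet_Ici) hk'
  exact (hasDerivWithinAt_integral_Ici ((hg.const_mul (k 0)).add hconv) hu).congr_of_mem
    (fun x hx => halfLineConv_eq_integral hg hk hx) hu

theorem contDiffOn_succ_halfLineConv_of_derivWithin {n : ℕ} (hg : ContDiffOn ℝ n g (Ici 0))
    (hk : ContDiffOn ℝ 1 k (Ici 0))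
    (hconv : ContDiffOn ℝ n (halfLineConv g (derivWithin k (Ici 0))) (Ici 0)) :
    ContDiffOn ℝ (n + 1) (halfLineConv g k) (Ici 0) := by
  have hderiv (u : ℝ) (hu : u ∈ Ici 0) :=
    hasDerivWithinAt_halfLineConv hg.continuousOn hk (mem_Ici.1 hu)
  refine (contDiffOn_succ_iff_derivWithin (uniqueDiffOn_Ici 0)).2
    ⟨fun u hu => (hderiv u hu).differentiableWithinAt, by simp,
      (((contDiffOn_const (c := k 0)).mul hg).add hconv).congr fun u hu => ?_⟩
  exact (hderiv u hu).derivWithin (uniqueDiffOn_Ici 0 u hu)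

theorem contDiffOn_succ_halfLineConv {n : ℕ} (hg : ContDiffOn ℝ n g (Ici 0))
    (hk : ContDiffOn ℝ (n + 1) k (Ici 0)) : ContDiffOn ℝ (n + 1) (halfLineConv g k) (Ici 0) := by
  induction n generalizing k with
  | zero =>
    have hk₁ : ContDiffOn ℝ 1 k (Ici 0) := hk.of_le (by simp)
    refine contDiffOn_succ_halfLineConv_of_derivWithin hg hk₁ (contDiffOn_zero.2 ?_)
    exact continuousOn_halfLineConv (hg.continuousOn.locallyIntegrableOn measurableSet_Ici)
      (hk₁.continuousOn_derivWithin (uniqueDiffOn_Ici 0) le_rfl)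
  | succ n ih =>
    rw [Nat.cast_succ] at hk
    refine contDiffOn_succ_halfLineConv_of_derivWithin hg (hk.of_le (by simp)) ?_
    rw [Nat.cast_succ]
    exact ih (hg.of_le (by simp))
      ((contDiffOn_succ_iff_derivWithin (uniqueDiffOn_Ici 0)).1 hk).2.2

theorem contDiffOn_add_two_halfLineConv {n : ℕ} (hg : ContDiffOn ℝ (n + 1) g (Ici 0))
    (hk : ContDiffOn ℝ (n + 1) k (Ici 0)) : ContDiffOn ℝ (n + 2) (halfLineConv g k) (Ici 0) := by
  have hconv := contDiffOn_succ_halfLineConv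
    ((contDiffOn_succ_iff_derivWithin (uniqueDiffOn_Ici 0)).1 hk).2.2 hg
  rw [halfLineConv_comm] at hconv
  rw [← one_add_one_eq_two, ← add_assoc]
  exact contDiffOn_succ_halfLineConv_of_derivWithin (n := n + 1) hg (hk.of_le (by simp)) hconv

end HalfLineConv

section AEStronglyMeasurable

variable {X β : Type*} [TopologicalSpace X] [MeasurableSpace X] [TopologicalSpace β]
  {f : X → β} {μ : Measure X} {s : Set X}

/-- The largest open set on which `f` is almost everywhere strongly measurable, in a second
countable space; it isolates the measurable part of a function about which nothing is known. -/
def aestronglyMeasurableLocus (f : X → β) (μ : Measure X) : Set X :=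
  ⋃₀ {U | IsOpen U ∧ AEStronglyMeasurable f (μ.restrict U)}

theorem isOpen_aestronglyMeasurableLocus (f : X → β) (μ : Measure X) :
    IsOpen (aestronglyMeasurableLocus f μ) :=
  isOpen_sUnion fun _ hU => hU.1

theorem subset_aestronglyMeasurableLocus (hs : IsOpen s)
    (hf : AEStronglyMeasurable f (μ.restrict s)) : s ⊆ aestronglyMeasurableLocus f μ :=
  subset_sUnion_of_mem ⟨hs, hf⟩

theorem aestronglyMeasurable_restrict_aestronglyMeasurableLocus [SecondCountableTopology X]
    [TopologicalSpace.PseudoMetrizableSpace β] (f : X → β) (μ : Measure X) :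
    AEStronglyMeasurable f (μ.restrict (aestronglyMeasurableLocus f μ)) := by
  obtain ⟨T, hT_countable, hT, hT_union⟩ := TopologicalSpace.isOpen_sUnion_countable
    {U | IsOpen U ∧ AEStronglyMeasurable f (μ.restrict U)} fun _ hU => hU.1
  have := hT_countable.to_subtype
  rw [aestronglyMeasurableLocus, ← hT_union, sUnion_eq_iUnion]
  exact aestronglyMeasurable_iUnion_iff.2 fun U => (hT U.2).2

theorem aestronglyMeasurable_restrict_of_mul {α 𝕜 : Type*} [MeasurableSpace α] [NormedField 𝕜]
    {ν : Measure α} {s : Set α} {g h : α → 𝕜} (hs : MeasurableSet s)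
    (hh : AEStronglyMeasurable h (ν.restrict s)) (hh0 : ∀ x ∈ s, h x ≠ 0)
    (hgh : AEStronglyMeasurable (fun x => g x * h x) (ν.restrict s)) :
    AEStronglyMeasurable g (ν.restrict s) := by
  refine (hgh.mul hh.inv₀).congr ?_
  filter_upwards [ae_restrict_mem hs] with x hx
  simp [hh0 x hx]

end AEStronglyMeasurable

section Measurability

variable {g k : ℝ → ℝ} {u : ℝ}

theorem subset_aestronglyMeasurableLocus_of_intervalIntegrable (hk : Continuous k)
    (hint : IntervalIntegrable (fun t => g t * k (u - t)) volume 0 u) :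
    Ioo 0 u ∩ {t | k (u - t) ≠ 0} ⊆ aestronglyMeasurableLocus g volume := by
  have hopen : IsOpen (Ioo 0 u ∩ {t | k (u - t) ≠ 0}) :=
    isOpen_Ioo.inter (isOpen_ne_fun (by fun_prop) continuous_const)
  refine subset_aestronglyMeasurableLocus hopen ?_
  refine aestronglyMeasurable_restrict_of_mul (h := fun t => k (u - t)) hopen.measurableSet
    (by fun_prop) (fun t ht => ht.2) ?_
  exact hint.1.aestronglyMeasurable.mono_set (inter_subset_left.trans Ioo_subset_Ioc_self)

theorem exists_isOpen_halfLineConv_eq_indicator (hk : Continuous k) (g : ℝ → ℝ) :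
    ∃ B, IsOpen B ∧ ∀ u, 0 ≤ u → halfLineConv g k u =
      Bᶜ.indicator (halfLineConv ((aestronglyMeasurableLocus g volume).indicator g) k) u := by
  set O := aestronglyMeasurableLocus g volume
  refine ⟨⋃ t ∈ Ioi 0 \ O, {u | t < u ∧ k (u - t) ≠ 0}, isOpen_biUnion fun t _ => ?_,
    fun u hu => ?_⟩
  · exact (isOpen_lt continuous_const continuous_id).inter
      (isOpen_ne_fun (by fun_prop) continuous_const)
  by_cases hB : u ∈ ⋃ t ∈ Ioi 0 \ O, {u | t < u ∧ k (u - t) ≠ 0}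
  · rw [indicator_of_notMem (notMem_compl_iff.2 hB)]
    obtain ⟨t, ⟨ht0, htO⟩, htu, hkt⟩ := mem_iUnion₂.1 hB
    exact intervalIntegral.integral_undef fun hint =>
      htO (subset_aestronglyMeasurableLocus_of_intervalIntegrable hk hint ⟨⟨ht0, htu⟩, hkt⟩)
  · rw [indicator_of_mem (mem_compl hB)]
    refine intervalIntegral.integral_congr_Ioo_of_le hu fun t ht => ?_
    by_cases htO : t ∈ O
    · rw [indicator_of_mem htO]
    · have hkt : k (u - t) = 0 := by
        by_contra hkt
        exact hB (mem_iUnion₂.2 ⟨t, ⟨ht.1, htO⟩, ht.2, hkt⟩)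
      rw [hkt, mul_zero, mul_zero]

theorem aestronglyMeasurable_halfLineConv (hg : ∀ x, 0 < x → ∃ M, ∀ u ∈ Icc 0 x, |g u| ≤ M)
    (hk : ContinuousOn k (Ici 0)) :
    AEStronglyMeasurable (halfLineConv g k) (volume.restrict (Ici 0)) := by
  obtain ⟨B, hB, hconv⟩ :=
    exists_isOpen_halfLineConv_eq_indicator (continuous_comp_max_of_continuousOn_Ici hk) g
  set g₁ := (aestronglyMeasurableLocus g volume).indicator g
  have hg₁_meas : AEStronglyMeasurable g₁ volume :=
    (aestronglyMeasurable_indicator_iff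
      (isOpen_aestronglyMeasurableLocus g volume).measurableSet).2
        (aestronglyMeasurable_restrict_aestronglyMeasurableLocus g volume)
  have hg₁ : LocallyIntegrableOn g₁ (Ici 0) := by
    refine locallyIntegrableOn_Ici_of_forall_exists_norm_le hg₁_meas.restrict fun x hx => ?_
    obtain ⟨M, hM⟩ := hg x hx
    exact ⟨M, fun u hu => (norm_indicator_le_norm_self g u).trans (hM u hu)⟩
  have hcont := continuousOn_halfLineConv hg₁
    (continuous_comp_max_of_continuousOn_Ici hk).continuousOn
  refine ((hcont.aestronglyMeasurable measurableSet_Ici).indicator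
    hB.isClosed_compl.measurableSet).congr ?_
  filter_upwards [ae_restrict_mem measurableSet_Ici] with u hu
  rw [← hconv u hu]
  exact halfLineConv_congr (eqOn_refl _ _) (fun t ht => by rw [max_eq_left (mem_Ioi.1 ht).le]) hu

end Measurability

section Renewal

variable {φ : ℝ} {k v m : ℝ → ℝ}

theorem continuousOn_of_renewal (hk : ContinuousOn k (Ici 0)) (hv : ContinuousOn v (Ici 0))
    (hm_loc : ∀ x, 0 < x → ∃ M, ∀ u ∈ Icc 0 x, |m u| ≤ M)
    (hm : EqOn m (fun u => φ * halfLineConv m k u + v u) (Ici 0)) : ContinuousOn m (Ici 0) := by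
  have hm_meas : AEStronglyMeasurable m (volume.restrict (Ici 0)) :=
    (((aestronglyMeasurable_halfLineConv hm_loc hk).const_mul φ).add
      (hv.aestronglyMeasurable measurableSet_Ici)).congr
        (ae_restrict_of_forall_mem measurableSet_Ici fun u hu => (hm hu).symm)
  have hm_int := locallyIntegrableOn_Ici_of_forall_exists_norm_le hm_meas hm_loc
  exact (((continuousOn_halfLineConv hm_int hk).const_mul φ).add hv).congr hm

theorem contDiffOn_of_renewal {n : ℕ} (hk : ContDiffOn ℝ (n + 1) k (Ici 0))
    (hv : ContDiffOn ℝ (n + 2) v (Ici 0))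
    (hm_loc : ∀ x, 0 < x → ∃ M, ∀ u ∈ Icc 0 x, |m u| ≤ M)
    (hm : EqOn m (fun u => φ * halfLineConv m k u + v u) (Ici 0)) :
    ContDiffOn ℝ (n + 2) m (Ici 0) := by
  have hsmooth {r : WithTop ℕ∞} (hr : r ≤ n + 2)
      (hconv : ContDiffOn ℝ r (halfLineConv m k) (Ici 0)) : ContDiffOn ℝ r m (Ici 0) :=
    ((contDiffOn_const.mul hconv).add (hv.of_le hr)).congr hm
  have hstep (j : ℕ) (hj : j ≤ n + 1) : ContDiffOn ℝ (j + 1) m (Ici 0) := by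
    induction j with
    | zero =>
      refine hsmooth (by norm_cast; lia) (contDiffOn_succ_halfLineConv (contDiffOn_zero.2 ?_)
        (hk.of_le (by norm_cast; lia)))
      exact continuousOn_of_renewal hk.continuousOn hv.continuousOn hm_loc hm
    | succ j ih =>
      have hconv := contDiffOn_add_two_halfLineConv (ih (by lia)) (hk.of_le (by norm_cast))
      refine hsmooth (by norm_cast; lia) ?_
      exact_mod_cast hconv
  exact_mod_cast hstep (n + 1) le_rfl

theorem derivWithin_of_renewal {u : ℝ} (hk : ContDiffOn ℝ 1 k (Ici 0))
    (hv : ContDiffOn ℝ 1 v (Ici 0)) (hm_cont : ContinuousOn m (Ici 0))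
    (hm : EqOn m (fun u => φ * halfLineConv m k u + v u) (Ici 0)) (hu : 0 ≤ u) :
    derivWithin m (Ici 0) u =
      φ * (halfLineConv m (derivWithin k (Ici 0)) u + m u * k 0) + derivWithin v (Ici 0) u := by
  have hv' := (hv.differentiableOn one_ne_zero u hu).hasDerivWithinAt
  have hm' := (((hasDerivWithinAt_halfLineConv hm_cont hk hu).const_mul φ).add hv').congr_of_mem
    hm hu
  rw [hm'.derivWithin (uniqueDiffOn_Ici 0 u hu)]
  ring

theorem stmt_2_general {n : ℕ} {f F : ℝ → ℝ} {f0 v'0 : ℝ}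
    (hFf : ∀ u, 0 < u → HasDerivAt F (f u) u)
    (hF : ContDiffOn ℝ (n + 2) F (Ici 0)) (hv : ContDiffOn ℝ (n + 2) v (Ici 0))
    (hm_loc : ∀ x, 0 < x → ∃ M, ∀ u ∈ Icc 0 x, |m u| ≤ M)
    (hm_eq : ∀ u, 0 ≤ u → m u = φ * (∫ y in (0 : ℝ)..u, m (u - y) * f y) + v u)
    (hf0 : Tendsto f (𝓝[>] 0) (𝓝 f0)) (hv'0 : Tendsto (deriv v) (𝓝[>] 0) (𝓝 v'0)) :
    ContDiffOn ℝ (n + 2) m (Ici 0) ∧ m 0 = v 0 ∧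
    (∀ u, 0 < u → deriv m u
        = φ * ((∫ y in (0 : ℝ)..u, m (u - y) * deriv f y) + m u * f0) + deriv v u) ∧
    Tendsto (deriv m) (𝓝[>] 0) (𝓝 (φ * v 0 * f0 + v'0)) := by
  set k := derivWithin F (Ici 0)
  have hfk : EqOn f k (Ioi 0) := fun u hu =>
    ((eqOn_derivWithin_Ici_deriv F 0 hu).trans (hFf u hu).deriv).symm
  have hk : ContDiffOn ℝ (n + 1) k (Ici 0) := hF.derivWithin (uniqueDiffOn_Ici 0) (by norm_cast)
  have hconv (h : ℝ → ℝ) (u : ℝ) : ∫ y in (0 : ℝ)..u, m (u - y) * h y = halfLineConv m h u := by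
    rw [halfLineConv_comm]
    simp only [halfLineConv, mul_comm]
  have hm : EqOn m (fun u => φ * halfLineConv m k u + v u) (Ici 0) := fun u hu => by
    rw [hm_eq u hu, hconv, halfLineConv_congr (eqOn_refl _ _) hfk hu]
  have hk0 : k 0 = f0 := tendsto_nhds_unique (tendsto_nhdsGT_of_continuousOn_Ici hk.continuousOn)
    (hf0.congr' (eventuallyEq_nhdsWithin_of_eqOn hfk))
  have hv0 : derivWithin v (Ici 0) 0 = v'0 :=
    tendsto_nhds_unique (tendsto_deriv_nhdsGT_of_contDiffOn_Ici (hv.of_le (by norm_cast; lia))) hv'0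
  have hm_smooth := contDiffOn_of_renewal hk hv hm_loc hm
  have hm0 : m 0 = v 0 := by simpa using hm_eq 0 le_rfl
  have hm' {u : ℝ} (hu : 0 ≤ u) := derivWithin_of_renewal (hk.of_le (by norm_cast; lia))
    (hv.of_le (by norm_cast; lia)) hm_smooth.continuousOn hm hu
  refine ⟨hm_smooth, hm0, fun u hu => ?_, ?_⟩
  · have hf' : EqOn (deriv f) (derivWithin k (Ici 0)) (Ioi 0) := fun t ht =>
      ((hfk.eventuallyEq_of_mem (Ioi_mem_nhds ht)).deriv_eq).trans
        (eqOn_derivWithin_Ici_deriv k 0 ht).symm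
    rw [hconv, halfLineConv_congr (eqOn_refl _ _) hf' hu.le, ← hk0,
      ← eqOn_derivWithin_Ici_deriv m 0 hu, ← eqOn_derivWithin_Ici_deriv v 0 hu, hm' hu.le]
  · have hm0' := hm' le_rfl
    rw [hk0, hv0, hm0, halfLineConv, intervalIntegral.integral_same, zero_add, ← mul_assoc] at hm0'
    rw [← hm0']
    exact tendsto_deriv_nhdsGT_of_contDiffOn_Ici (hm_smooth.of_le (by norm_cast; lia))

end Renewal

end

/-- for the defective renewal equation
`m(u) = φ ∫₀^u m(u-y) f(y) dy + v(u)` with `0 < φ < 1`, `f` the density of an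
absolutely continuous nonnegative random variable with distribution function `F`
(`F(0) = 0`), `v` locally bounded, `m` the locally bounded solution, and
`F, v ∈ C²₀([0,∞))`: the solution `m` belongs to `C²₀([0,∞))`, `m(0) = v(0)`,
`m'(u) = φ(∫₀^u m(u-y) f'(y) dy + m(u) f(0)) + v'(u)` for `u > 0`, and
`m'(0⁺) = φ v(0) f(0) + v'(0)`. -/
theorem stmt_2 (φ : ℝ) (hφ0 : 0 < φ) (hφ1 : φ < 1)
    (f F v m : ℝ → ℝ)
    (hf_nonneg : ∀ u : ℝ, 0 < u → 0 ≤ f u)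
    (hf_integrable : MeasureTheory.IntegrableOn f (Set.Ioi 0))
    (hf_total : ∫ y in Set.Ioi (0:ℝ), f y = 1)
    (hF_def : ∀ u : ℝ, 0 ≤ u → F u = ∫ y in (0:ℝ)..u, f y)
    (hFf : ∀ u : ℝ, 0 < u → HasDerivAt F (f u) u)
    (hv_loc : ∀ x : ℝ, 0 < x → ∃ M, ∀ u ∈ Set.Icc (0:ℝ) x, |v u| ≤ M)
    (hm_loc : ∀ x : ℝ, 0 < x → ∃ M, ∀ u ∈ Set.Icc (0:ℝ) x, |m u| ≤ M)
    (hm_eq : ∀ u : ℝ, 0 ≤ u →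
      m u = φ * (∫ y in (0:ℝ)..u, m (u - y) * f y) + v u)
    (hF_c : ContinuousOn F (Set.Ici 0)) (hF_cd : ContDiffOn ℝ 2 F (Set.Ioi 0))
    (hF_lim : ∀ k ≤ 2, ∃ L, Tendsto (iteratedDeriv k F) (𝓝[>] (0:ℝ)) (𝓝 L))
    (hv_c : ContinuousOn v (Set.Ici 0)) (hv_cd : ContDiffOn ℝ 2 v (Set.Ioi 0))
    (hv_lim : ∀ k ≤ 2, ∃ L, Tendsto (iteratedDeriv k v) (𝓝[>] (0:ℝ)) (𝓝 L))
    (f0 v'0 : ℝ)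
    (hf0 : Tendsto f (𝓝[>] (0:ℝ)) (𝓝 f0))
    (hv'0 : Tendsto (deriv v) (𝓝[>] (0:ℝ)) (𝓝 v'0)) :
    (ContinuousOn m (Set.Ici 0) ∧ ContDiffOn ℝ 2 m (Set.Ioi 0) ∧
      ∀ k ≤ 2, ∃ L, Tendsto (iteratedDeriv k m) (𝓝[>] (0:ℝ)) (𝓝 L)) ∧
    m 0 = v 0 ∧
    (∀ u : ℝ, 0 < u → deriv m u
        = φ * ((∫ y in (0:ℝ)..u, m (u - y) * deriv f y) + m u * f0) + deriv v u) ∧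
    Tendsto (deriv m) (𝓝[>] (0:ℝ)) (𝓝 (φ * v 0 * f0 + v'0)) := by
  have hF := contDiffOn_Ici_iff.2 ⟨hF_c, hF_cd, hF_lim⟩
  have hv := contDiffOn_Ici_iff.2 ⟨hv_c, hv_cd, hv_lim⟩
  obtain ⟨hm, hm0, hm', hm'0⟩ := stmt_2_general (n := 0) hFf (by simpa using hF)
    (by simpa using hv) hm_loc hm_eq hf0 hv'0
  exact ⟨contDiffOn_Ici_iff.1 (by simpa using hm), hm0, hm', hm'0⟩
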